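/- Suppose the sequence of positive integers (a_1, ..., a_n) is obtained from the initial sequence (1, 1, 1) by a finite sequence of moves, each move being a cyclic rotation, an operation of the first type, or an operation of the second type. If the total number of operations of the second type used is even, then M(a_1, ..., a_n) = −Id, and if it is odd, then M(a_1, ..., a_n) = Id. In particular, every such sequence is a solution of Problem I or of Problem II. -/

import Mathlib

open Matrix

def elemMat (a : ℤ) : Matrix (Fin 2) (Fin 2) ℤ := !![a, -1; 1, 0]

/-- `M (a₁ :: ... :: aₙ)` is the product `E(aₙ) ⋯ E(a₁)` with the factor for `a₁` rightmost. -/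
def M : List ℤ → Matrix (Fin 2) (Fin 2) ℤ
  | [] => 1
  | a :: t => M t * elemMat a


/-- `Reaches l S R l'` : `l'` is obtained from `l` by a finite sequence of moves:
cyclic rotations, exactly `S` operations of the first type (including the cyclic
position variant), and exactly `R` operations of the second type. -/
inductive Reaches : List ℤ → ℕ → ℕ → List ℤ → Prop
  | refl (l : List ℤ) : Reaches l 0 0 l
  | rot {l : List ℤ} {S R : ℕ} (a : ℤ) (t : List ℤ) :
      Reaches l S R (a :: t) → Reaches l S R (t ++ [a])
  | op1 {l : List ℤ} {S R : ℕ} (u : List ℤ) (a b : ℤ) (w : List ℤ) :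
      Reaches l S R (u ++ a :: b :: w) →
      Reaches l (S + 1) R (u ++ (a + 1) :: 1 :: (b + 1) :: w)
  | op1cyc {l : List ℤ} {S R : ℕ} (a : ℤ) (m : List ℤ) (b : ℤ) :
      Reaches l S R (a :: (m ++ [b])) →
      Reaches l (S + 1) R ((a + 1) :: (m ++ [b + 1, 1]))
  | op2 {l : List ℤ} {S R : ℕ} (u : List ℤ) (a' a'' : ℤ) (w : List ℤ) :
      0 < a' → 0 < a'' →
      Reaches l S R (u ++ (a' + a'' - 1) :: w) →
      Reaches l S (R + 1) (u ++ a' :: 1 :: 1 :: a'' :: w)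


theorem M_append (u w : List ℤ) : M (u ++ w) = M w * M u := by
  induction u with
  | nil => simp [M]
  | cons a t ih => simp [M, ih, Matrix.mul_assoc]

theorem elem_op1 (a b : ℤ) :
    elemMat (a + 1) * (elemMat 1 * elemMat (b + 1)) = elemMat a * elemMat b := by
  ext i j
  fin_cases i <;> fin_cases j <;> simp [elemMat, Matrix.mul_apply, Fin.sum_univ_two] <;> ring

theorem elem_op2 (a b : ℤ) :
    elemMat b * (elemMat 1 * (elemMat 1 * elemMat a)) = -elemMat (a + b - 1) := by
  ext i j
  fin_cases i <;> fin_cases j <;> simp [elemMat, Matrix.mul_apply, Fin.sum_univ_two] <;> ring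

/-- If a product is plus or minus the identity, so is the product in the other order. -/
theorem mul_sign_comm (A B : Matrix (Fin 2) (Fin 2) ℤ) (k : ℕ) (h : A * B = (-1) ^ k) :
    B * A = (-1) ^ k := by
  rcases neg_one_pow_eq_or (Matrix (Fin 2) (Fin 2) ℤ) k with hk | hk
  · rw [hk] at h ⊢
    exact mul_eq_one_comm.mp h
  · rw [hk] at h ⊢
    have h1 : (-A) * B = 1 := by rw [neg_mul, h, neg_neg]
    have h2 : B * (-A) = 1 := mul_eq_one_comm.mp h1
    rw [mul_neg] at h2
    rw [← h2, neg_neg]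

theorem reaches_M (l₀ l : List ℤ) (S R : ℕ) (h : Reaches l₀ S R l) (h₀ : M l₀ = -1) :
    M l = (-1) ^ (R + 1) := by
  induction h with
  | refl => simpa using h₀
  | rot a t _ ih =>
    have := mul_sign_comm _ _ _ ih
    simpa [M_append, M] using this
  | op1 u a b w _ ih =>
    rw [← ih]
    simp only [M_append, M]
    simp only [Matrix.mul_assoc]
    have := congrArg (fun X => M w * (X * M u)) (elem_op1 b a)
    simpa only [Matrix.mul_assoc] using this
  | op1cyc a m b _ ih =>
    have h1 := ih
    simp only [M, M_append, Matrix.one_mul] at h1 ⊢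
    rw [Matrix.mul_assoc] at h1
    have h2 := mul_sign_comm _ _ _ h1
    have h3 := mul_sign_comm (M m) (elemMat a * elemMat b) _ (by
      rw [← Matrix.mul_assoc]; exact mul_sign_comm _ _ _ h1)
    rw [← elem_op1] at h3
    simp only [Matrix.mul_assoc] at h3
    have h4 := mul_sign_comm _ _ _ h3
    simpa only [Matrix.mul_assoc] using h4
  | op2 u a b w _ _ _ ih =>
    rw [pow_succ, ← ih]
    simp only [M_append, M]
    have := congrArg (fun X => M w * (X * M u)) (elem_op2 a b)
    simpa [Matrix.mul_assoc] using this

/-- Every sequence obtained from `(1,1,1)` by the surgery operations and rotations is a solution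
of Problem II if the number of operations of the second type is even, and of Problem I if odd. -/
theorem reaches_solves_I_or_II (l : List ℤ) (S R : ℕ)
    (h : Reaches [1, 1, 1] S R l) :
    (Even R → M l = -1) ∧ (Odd R → M l = 1) := by
  have h₀ : M [1, 1, 1] = -1 := by
    ext i j
    fin_cases i <;> fin_cases j <;> simp [M, elemMat, Matrix.mul_apply, Fin.sum_univ_two]
  have hM := reaches_M _ _ _ _ h h₀
  refine ⟨fun hR => ?_, fun hR => ?_⟩
  · rw [hM, hR.add_one.neg_one_pow]
  · rw [hM, hR.add_one.neg_one_pow]
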